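/- For every natural number n ≥ 4, the Orchard crossing number of the complete graph K_n equals 2·C(n,4), i.e., OCN(K_n) = 2·(n choose 4), and this minimum is attained by any rectilinear drawing placing all n vertices in convex position. -/

import Mathlib

set_option linter.unusedSectionVars false

/-!
Common definitions for the Orchard crossing number
(Feder–Garber, "The Orchard crossing number of an abstract graph").
-/

noncomputable section

/-- Points of the plane. -/
abbrev Pt : Type := ℝ × ℝ

/-- The line through two points of the plane. -/
def lineThrough (p q : Pt) : Set Pt := (affineSpan ℝ ({p, q} : Set Pt) : Set Pt)

/-- A line (or any set) `L` separates the points `P` and `Q` if both lie off `L`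
and they lie in different connected components of the complement of `L`. -/
def Separates (L : Set Pt) (P Q : Pt) : Prop :=
  P ∉ L ∧ Q ∉ L ∧ connectedComponentIn Lᶜ P ≠ connectedComponentIn Lᶜ Q

theorem Separates.symm {L : Set Pt} {P Q : Pt} (h : Separates L P Q) : Separates L Q P :=
  ⟨h.2.1, h.1, h.2.2.symm⟩

/-- A generic configuration: a finite set of points, no three of which are collinear. -/
def GenericConfig (S : Set Pt) : Prop :=
  S.Finite ∧ ∀ p ∈ S, ∀ q ∈ S, ∀ r ∈ S, p ≠ q → p ≠ r → q ≠ r →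
    ¬ Collinear ℝ ({p, q, r} : Set Pt)

/-- A finite set of points is in convex position if every point of it is an extreme
point of its convex hull, i.e. lies outside the convex hull of the other points. -/
def ConvexPosition (S : Set Pt) : Prop :=
  ∀ p ∈ S, p ∉ convexHull ℝ (S \ {p})

variable {V : Type*} [Fintype V] [DecidableEq V]

/-- A rectilinear drawing of a graph on vertex set `V`: an injective placement of the
vertices in the plane whose image is a generic configuration. -/
def IsRectDrawing (f : V → Pt) : Prop :=
  Function.Injective f ∧ GenericConfig (Set.range f)

/-- `sepCount f s t` is `n(s,t)`: the number of (unordered) pairs of vertices, both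
different from `s` and `t`, whose drawn points span a line separating `f s` from `f t`. -/
def sepCount (f : V → Pt) (s t : V) : ℕ :=
  Set.ncard {e : Finset V | ∃ a b : V, e = {a, b} ∧ a ≠ b ∧ s ∉ e ∧ t ∉ e ∧
    Separates (lineThrough (f a) (f b)) (f s) (f t)}

theorem sepCount_symm (f : V → Pt) (s t : V) : sepCount f s t = sepCount f t s := by
  unfold sepCount
  congr 1
  ext e
  constructor
  · rintro ⟨a, b, rfl, hab, hs, ht, hsep⟩
    exact ⟨a, b, rfl, hab, ht, hs, hsep.symm⟩
  · rintro ⟨a, b, rfl, hab, ht, hs, hsep⟩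
    exact ⟨a, b, rfl, hab, hs, ht, hsep.symm⟩

/-- The crossing number `n(R(G))` of a drawing: the sum of `n(s,t)` over all edges. -/
def drawingCrossings (G : SimpleGraph V) (f : V → Pt) : ℕ :=
  ∑ e ∈ G.edgeSet.toFinite.toFinset,
    Sym2.lift ⟨fun s t => sepCount f s t, fun s t => sepCount_symm f s t⟩ e

/-- The Orchard crossing number: the minimum of `n(R(G))` over all rectilinear drawings. -/
def OCN (G : SimpleGraph V) : ℕ :=
  sInf {n | ∃ f : V → Pt, IsRectDrawing f ∧ drawingCrossings G f = n}

/-- The maximal Orchard crossing number: the maximum of `n(R(G))` over all drawings. -/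
def MOCN (G : SimpleGraph V) : ℕ :=
  sSup {n | ∃ f : V → Pt, IsRectDrawing f ∧ drawingCrossings G f = n}

/-- The open segment drawn for an edge. -/
def edgeSeg (f : V → Pt) (e : Sym2 V) : Set Pt :=
  Sym2.lift ⟨fun a b => openSegment ℝ (f a) (f b), fun a b => openSegment_symm ℝ (f a) (f b)⟩ e

/-- The number of unordered pairs of distinct edges of `G` whose drawn open segments
intersect. -/
def crossPairs (G : SimpleGraph V) (f : V → Pt) : ℕ :=
  Set.ncard {p : Finset (Sym2 V) | ∃ e₁ e₂ : Sym2 V, p = {e₁, e₂} ∧ e₁ ≠ e₂ ∧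
    e₁ ∈ G.edgeSet ∧ e₂ ∈ G.edgeSet ∧ (edgeSeg f e₁ ∩ edgeSeg f e₂).Nonempty}

/-- The rectilinear crossing number: the minimum number of crossing pairs of edges
over all rectilinear drawings. -/
def rcr (G : SimpleGraph V) : ℕ :=
  sInf {n | ∃ f : V → Pt, IsRectDrawing f ∧ crossPairs G f = n}

/-- The number of 4-element subsets of the drawn points which are in convex position. -/
def convexFour (f : V → Pt) : ℕ :=
  Set.ncard {Q : Finset Pt | Q.card = 4 ∧ (Q : Set Pt) ⊆ Set.range f ∧
    ConvexPosition (Q : Set Pt)}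

/-- The cyclic successor on `Fin n`. -/
def nextFin {n : ℕ} (i : Fin n) : Fin n :=
  ⟨(i.val + 1) % n, Nat.mod_lt _ (Nat.zero_lt_of_lt i.isLt)⟩

/-- The star graph `K_{n,1}` on `n+1` vertices: the center `0` is joined to each of
the `n` outer vertices. -/
def starGraph (n : ℕ) : SimpleGraph (Fin (n + 1)) :=
  SimpleGraph.fromEdgeSet {e | ∃ i : Fin n, e = s((0 : Fin (n + 1)), i.succ)}

/-- The wheel graph `W_{n,1}` on `n+1` vertices: a cycle on the `n` outer vertices
together with a hub `0` joined to each of them. -/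
def wheelGraph (n : ℕ) : SimpleGraph (Fin (n + 1)) :=
  SimpleGraph.fromEdgeSet
    ({e | ∃ i : Fin n, e = s((0 : Fin (n + 1)), i.succ)} ∪
     {e | ∃ i : Fin n, e = s(i.succ, (nextFin i).succ)})

/-- The cycle graph `C_n` on the outer vertices `1, …, n` of `Fin (n+1)`, together
with the isolated vertex `0`. -/
def cycleWithIsolated (n : ℕ) : SimpleGraph (Fin (n + 1)) :=
  SimpleGraph.fromEdgeSet {e | ∃ i : Fin n, e = s(i.succ, (nextFin i).succ)}

/-- `HullCycle f` says that for every `i`, all the other drawn points lie (strictly) on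
one side of the line through `f i` and `f (i+1)`; for an injective generic placement this
means the points are in convex position and occur around the convex hull exactly in the
cyclic order `f 0, f 1, …`. -/
def HullCycle {m : ℕ} (f : Fin m → Pt) : Prop :=
  ∀ i j l : Fin m, j ≠ i → j ≠ nextFin i → l ≠ i → l ≠ nextFin i →
    ¬ Separates (lineThrough (f i) (f (nextFin i))) (f j) (f l)

end

open Finset

/-- Twice the signed area of the triangle `p q r`. -/
def orient (p q r : Pt) : ℝ :=
  (q.1 - p.1) * (r.2 - p.2) - (q.2 - p.2) * (r.1 - p.1)

theorem mem_lineThrough_iff {p q : Pt} (h : p ≠ q) (r : Pt) :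
    r ∈ lineThrough p q ↔ orient p q r = 0 := by
  unfold lineThrough orient
  rw [SetLike.mem_coe, mem_affineSpan_pair_iff_exists_lineMap_eq]
  constructor
  · rintro ⟨t, rfl⟩
    simp [AffineMap.lineMap_apply]
    ring
  · intro h0
    by_cases h1 : p.1 = q.1
    · have h2 : q.2 - p.2 ≠ 0 := fun h2 => h (Prod.ext h1 (sub_eq_zero.1 h2).symm)
      have h3 : r.1 = p.1 := by
        have : (q.2 - p.2) * (r.1 - p.1) = 0 := by rw [h1] at h0 ⊢; linarith
        simpa [h2, sub_eq_zero] using this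
      refine ⟨(r.2 - p.2) / (q.2 - p.2), Prod.ext ?_ ?_⟩
      · simp [AffineMap.lineMap_apply, h1, h3]
      · simp [AffineMap.lineMap_apply]
        field_simp
        ring
    · have h2 : q.1 - p.1 ≠ 0 := fun h2 => h1 (sub_eq_zero.1 h2).symm
      refine ⟨(r.1 - p.1) / (q.1 - p.1), Prod.ext ?_ ?_⟩
      · simp [AffineMap.lineMap_apply]
        field_simp
        ring
      · simp [AffineMap.lineMap_apply]
        field_simp
        linarith

theorem orient_ne_zero {p q r : Pt} (h : p ≠ q) (hc : ¬ Collinear ℝ ({p, q, r} : Set Pt)) :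
    orient p q r ≠ 0 := by
  intro h0
  apply hc
  have := collinear_insert_of_mem_affineSpan_pair ((mem_lineThrough_iff h r).2 h0)
  rwa [Set.insert_comm, Set.pair_comm] at this

theorem separates_iff {p q r s : Pt} (h : p ≠ q) :
    Separates (lineThrough p q) r s ↔ orient p q r * orient p q s < 0 := by
  have hcont : Continuous (orient p q) := by unfold orient; fun_prop
  constructor
  · rintro ⟨hr, hs, hne⟩
    rw [mem_lineThrough_iff h] at hr hs
    by_contra! hpos
    apply hne
    apply connectedComponentIn_eq
    have hpos' : 0 < orient p q r * orient p q s := lt_of_le_of_ne hpos (mul_ne_zero hr hs).symm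
    refine (convex_segment r s).isPreconnected.subset_connectedComponentIn
      (left_mem_segment ℝ r s) ?_ (right_mem_segment ℝ r s)
    rintro _ ⟨u, v, hu, hv, huv, rfl⟩ hx
    rw [mem_lineThrough_iff h] at hx
    have hlin : orient p q (u • r + v • s) = u * orient p q r + v * orient p q s := by
      obtain rfl : u = 1 - v := by linarith
      simp [orient]
      ring
    rw [hlin] at hx
    rcases hu.eq_or_lt with rfl | hu
    · obtain rfl : v = 1 := by linarith
      apply hs
      linarith
    · have h1 : 0 < u * (orient p q r * orient p q r) := mul_pos hu (mul_self_pos.2 hr)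
      have h2 : 0 ≤ v * (orient p q r * orient p q s) := by positivity
      have h3 := congrArg (orient p q r * ·) hx
      linarith
  · intro hneg
    have hr : orient p q r ≠ 0 := left_ne_zero_of_mul hneg.ne
    have hs : orient p q s ≠ 0 := right_ne_zero_of_mul hneg.ne
    refine ⟨by rwa [mem_lineThrough_iff h], by rwa [mem_lineThrough_iff h], fun heq => ?_⟩
    have hrm : r ∈ connectedComponentIn (lineThrough p q)ᶜ r :=
      mem_connectedComponentIn (by rwa [Set.mem_compl_iff, mem_lineThrough_iff h])
    have hsm : s ∈ connectedComponentIn (lineThrough p q)ᶜ r := by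
      rw [heq]
      exact mem_connectedComponentIn (by rwa [Set.mem_compl_iff, mem_lineThrough_iff h])
    have hconn : (orient p q '' connectedComponentIn (lineThrough p q)ᶜ r).OrdConnected :=
      (isPreconnected_connectedComponentIn.image _ hcont.continuousOn).ordConnected
    have h0 : (0 : ℝ) ∈ orient p q '' connectedComponentIn (lineThrough p q)ᶜ r := by
      rcases mul_neg_iff.1 hneg with ⟨h1, h2⟩ | ⟨h1, h2⟩
      · exact hconn.out ⟨s, hsm, rfl⟩ ⟨r, hrm, rfl⟩ ⟨h2.le, h1.le⟩
      · exact hconn.out ⟨r, hrm, rfl⟩ ⟨s, hsm, rfl⟩ ⟨h1.le, h2.le⟩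
    obtain ⟨x, hx, hx0⟩ := h0
    exact connectedComponentIn_subset _ _ hx ((mem_lineThrough_iff h x).2 hx0)

theorem mem_convexHull_of_affine_relation {p q r s : Pt} {a b c d : ℝ}
    (hsum : a + b + c + d = 0) (hvec : a • p + b • q + c • r + d • s = 0)
    (hbc : 0 < b * c) (hcd : 0 < c * d) : p ∈ convexHull ℝ ({q, r, s} : Set Pt) := by
  have hc : c ≠ 0 := right_ne_zero_of_mul hbc.ne'
  have hab : 0 < b / c ∧ 0 < d / c := by
    constructor <;> rw [← mul_pos_iff_of_pos_right (sq_pos_of_ne_zero hc)] <;> field_simp <;>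
      linarith
  have hT : b / c + 1 + d / c = - a / c := by field_simp; linarith
  have hpos : 0 < -a / c := by rw [← hT]; linarith [hab.1, hab.2]
  have ha : a ≠ 0 := by rintro rfl; simp at hpos
  have hs : ({q, r, s} : Set Pt) ⊆ convexHull ℝ {q, r, s} := subset_convexHull ℝ _
  have hw : b / (-a) = (b / c) / (-a / c) ∧ c / (-a) = 1 / (-a / c) ∧
      d / (-a) = (d / c) / (-a / c) := by
    refine ⟨?_, ?_, ?_⟩ <;> field_simp
  have hp : p = ∑ i : Fin 3, (![b / (-a), c / (-a), d / (-a)] i) • (![q, r, s] i) := by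
    have h1 := congrArg Prod.fst hvec
    have h2 := congrArg Prod.snd hvec
    simp at h1 h2
    ext <;> simp [Fin.sum_univ_three] <;> field_simp <;> linarith
  rw [hp]
  refine (convex_convexHull ℝ _).sum_mem ?_ ?_ ?_
  · intro i _
    fin_cases i
    · simpa using hw.1 ▸ (div_pos hab.1 hpos).le
    · simpa using hw.2.1 ▸ (div_pos one_pos hpos).le
    · simpa using hw.2.2 ▸ (div_pos hab.2 hpos).le
  · simp [Fin.sum_univ_three]
    field_simp
    linarith
  · intro i _
    apply hs
    fin_cases i <;> simp

open Classical in
/-- The number of the six splittings of four points into two pairs in which the line through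
the second pair separates the first pair. -/
noncomputable def separationCount (p q r s : Pt) : ℕ :=
  (if Separates (lineThrough r s) p q then 1 else 0) +
  (if Separates (lineThrough q s) p r then 1 else 0) +
  (if Separates (lineThrough q r) p s then 1 else 0) +
  (if Separates (lineThrough p s) q r then 1 else 0) +
  (if Separates (lineThrough p r) q s then 1 else 0) +
  (if Separates (lineThrough p q) r s then 1 else 0)

section FourPoints

variable {S : Set Pt} {p q r s : Pt}

theorem separationCount_eq (hpq : p ≠ q) (hpr : p ≠ r) (hps : p ≠ s) (hqr : q ≠ r) (hqs : q ≠ s)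
    (hrs : r ≠ s) {a b c d : ℝ} (ha : a = orient q r s) (hb : b = - orient p r s)
    (hc : c = orient p q s) (hd : d = - orient p q r) :
    separationCount p q r s = (if 0 < a * b then 1 else 0) + (if 0 < a * c then 1 else 0) +
      (if 0 < a * d then 1 else 0) + (if 0 < b * c then 1 else 0) +
      (if 0 < b * d then 1 else 0) + (if 0 < c * d then 1 else 0) := by
  have e1 : orient r s p * orient r s q = -(a * b) := by subst_vars; unfold orient; ring
  have e2 : orient q s p * orient q s r = -(a * c) := by subst_vars; unfold orient; ring
  have e3 : orient q r p * orient q r s = -(a * d) := by subst_vars; unfold orient; ring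
  have e4 : orient p s q * orient p s r = -(b * c) := by subst_vars; unfold orient; ring
  have e5 : orient p r q * orient p r s = -(b * d) := by subst_vars; unfold orient; ring
  have e6 : orient p q r * orient p q s = -(c * d) := by subst_vars; unfold orient; ring
  simp only [separationCount, separates_iff, hpq, hpr, hps, hqr, hqs, hrs, e1, e2, e3, e4, e5, e6,
    ne_eq, not_false_eq_true, neg_lt_zero]

theorem separationCount_spec (hS : GenericConfig S) (hp : p ∈ S) (hq : q ∈ S) (hr : r ∈ S)
    (hs : s ∈ S) (hpq : p ≠ q) (hpr : p ≠ r) (hps : p ≠ s) (hqr : q ≠ r) (hqs : q ≠ s)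
    (hrs : r ≠ s) :
    2 ≤ separationCount p q r s ∧ (ConvexPosition S → separationCount p q r s = 2) := by
  obtain ⟨a, ha⟩ : ∃ a, a = orient q r s := ⟨_, rfl⟩
  obtain ⟨b, hb⟩ : ∃ b, b = - orient p r s := ⟨_, rfl⟩
  obtain ⟨c, hc⟩ : ∃ c, c = orient p q s := ⟨_, rfl⟩
  obtain ⟨d, hd⟩ : ∃ d, d = - orient p q r := ⟨_, rfl⟩
  have ha0 : a ≠ 0 := ha ▸ orient_ne_zero hqr (hS.2 q hq r hr s hs hqr hqs hrs)
  have hb0 : b ≠ 0 := hb ▸ neg_ne_zero.2 (orient_ne_zero hpr (hS.2 p hp r hr s hs hpr hps hrs))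
  have hc0 : c ≠ 0 := hc ▸ orient_ne_zero hpq (hS.2 p hp q hq s hs hpq hps hqs)
  have hd0 : d ≠ 0 := hd ▸ neg_ne_zero.2 (orient_ne_zero hpq (hS.2 p hp q hq r hr hpq hpr hqr))
  have hsum : a + b + c + d = 0 := by subst_vars; unfold orient; ring
  have hvec : a • p + b • q + c • r + d • s = 0 := by
    subst_vars
    unfold orient
    ext <;> simp <;> ring
  have hconv : ConvexPosition S →
      ¬ (0 < b * c ∧ 0 < c * d) ∧ ¬ (0 < a * c ∧ 0 < c * d) ∧
      ¬ (0 < a * b ∧ 0 < b * d) ∧ ¬ (0 < a * b ∧ 0 < b * c) := by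
    intro hcv
    have mem_of : ∀ {x y : Pt}, x ∈ S → x ≠ y → x ∈ S \ {y} := fun hx hxy => ⟨hx, hxy⟩
    refine ⟨fun h => hcv p hp ?_, fun h => hcv q hq ?_, fun h => hcv r hr ?_,
      fun h => hcv s hs ?_⟩
    · refine convexHull_mono ?_ (mem_convexHull_of_affine_relation hsum hvec h.1 h.2)
      rintro x (rfl | rfl | rfl)
      exacts [mem_of hq hpq.symm, mem_of hr hpr.symm, mem_of hs hps.symm]
    · refine convexHull_mono ?_ (mem_convexHull_of_affine_relation (p := q) (q := p) (r := r)
        (s := s) (a := b) (by linarith) (by rw [← hvec]; abel) h.1 h.2)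
      rintro x (rfl | rfl | rfl)
      exacts [mem_of hp hpq, mem_of hr hqr.symm, mem_of hs hqs.symm]
    · refine convexHull_mono ?_ (mem_convexHull_of_affine_relation (p := r) (q := p) (r := q)
        (s := s) (a := c) (by linarith) (by rw [← hvec]; abel) h.1 h.2)
      rintro x (rfl | rfl | rfl)
      exacts [mem_of hp hpr, mem_of hq hqr, mem_of hs hrs.symm]
    · refine convexHull_mono ?_ (mem_convexHull_of_affine_relation (p := s) (q := p) (r := q)
        (s := r) (a := d) (by linarith) (by rw [← hvec]; abel) h.1 h.2)
      rintro x (rfl | rfl | rfl)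
      exacts [mem_of hp hps, mem_of hq hqs, mem_of hr hrs]
  rw [separationCount_eq hpq hpr hps hqr hqs hrs ha hb hc hd]
  clear ha hb hc hd hvec
  rcases ha0.lt_or_gt with ha | ha <;> rcases hb0.lt_or_gt with hb | hb <;>
  rcases hc0.lt_or_gt with hc | hc <;> rcases hd0.lt_or_gt with hd | hd <;>
  first
  | (exfalso; linarith)
  | (simp only [mul_pos_iff, ha, hb, hc, hd, ha.not_gt, hb.not_gt, hc.not_gt, hd.not_gt] at hconv ⊢
     simp_all)

end FourPoints

section DoubleCounting

variable {V : Type*} [Fintype V] [DecidableEq V]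

/-- The line through the images of the pair `e'` separates the images of the ends of `e`. -/
def PairSeparates (f : V → Pt) (e : Sym2 V) (e' : Finset V) : Prop :=
  ∃ s t a b : V, e = s(s, t) ∧ e' = {a, b} ∧ s ≠ t ∧ a ≠ b ∧ s ∉ e' ∧ t ∉ e' ∧
    Separates (lineThrough (f a) (f b)) (f s) (f t)

theorem lineThrough_comm (p q : Pt) : lineThrough p q = lineThrough q p := by
  unfold lineThrough
  rw [Set.pair_comm]

theorem pairSeparates_mk {f : V → Pt} {s t : V} (hst : s ≠ t) (e' : Finset V) :
    PairSeparates f s(s, t) e' ↔ ∃ a b : V, e' = {a, b} ∧ a ≠ b ∧ s ∉ e' ∧ t ∉ e' ∧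
      Separates (lineThrough (f a) (f b)) (f s) (f t) := by
  constructor
  · rintro ⟨s', t', a, b, he, rfl, -, hab, hs, ht, hsep⟩
    rcases Sym2.eq_iff.1 he with ⟨rfl, rfl⟩ | ⟨rfl, rfl⟩
    · exact ⟨a, b, rfl, hab, hs, ht, hsep⟩
    · exact ⟨a, b, rfl, hab, ht, hs, hsep.symm⟩
  · rintro ⟨a, b, h⟩
    exact ⟨s, t, a, b, rfl, h.1, hst, h.2⟩

theorem pairSeparates_mk_pair {f : V → Pt} {s t a b : V} (hst : s ≠ t) (hab : a ≠ b)
    (hsa : s ≠ a) (hsb : s ≠ b) (hta : t ≠ a) (htb : t ≠ b) :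
    PairSeparates f s(s, t) {a, b} ↔ Separates (lineThrough (f a) (f b)) (f s) (f t) := by
  rw [pairSeparates_mk hst]
  constructor
  · rintro ⟨a', b', he, hab', hs, ht, hsep⟩
    have h : s(a, b) = s(a', b') := by
      have h1 : a ∈ ({a', b'} : Finset V) := he ▸ by simp
      have h2 : b ∈ ({a', b'} : Finset V) := he ▸ by simp
      simp only [Finset.mem_insert, Finset.mem_singleton] at h1 h2
      rw [Sym2.eq_iff]
      grind
    rcases Sym2.eq_iff.1 h with ⟨rfl, rfl⟩ | ⟨rfl, rfl⟩
    · exact hsep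
    · rwa [lineThrough_comm]
  · intro h
    exact ⟨a, b, rfl, hab, by simp [hsa, hsb], by simp [hta, htb], h⟩

open Classical in
theorem drawingCrossings_top_eq_card (f : V → Pt) :
    drawingCrossings (⊤ : SimpleGraph V) f =
      #{x : Sym2 V × Finset V | PairSeparates f x.1 x.2} := by
  have hfib : ∀ e : Sym2 V, e ∈ (⊤ : SimpleGraph V).edgeSet →
      Sym2.lift ⟨fun s t => sepCount f s t, fun s t => sepCount_symm f s t⟩ e =
        #{e' : Finset V | PairSeparates f e e'} := by
    intro e
    induction e with | _ s t =>
    intro he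
    have hst : s ≠ t := by simpa using he
    rw [Sym2.lift_mk]
    simp only [sepCount, ← Set.ncard_coe_finset, Finset.coe_filter, Finset.mem_univ, true_and]
    simp only [pairSeparates_mk hst]
  rw [← Finset.univ_product_univ, Finset.card_filter, Finset.sum_product]
  simp only [← Finset.card_filter]
  unfold drawingCrossings
  rw [Finset.sum_congr rfl fun e he => hfib e (by simpa using he)]
  refine Finset.sum_subset (Finset.subset_univ _) fun e _ he => ?_
  rw [Finset.card_eq_zero, Finset.filter_eq_empty_iff]
  rintro e' - ⟨s, t, a, b, rfl, -, hst, -⟩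
  simp [hst] at he

theorem pairSeparates_card {f : V → Pt} {e : Sym2 V} {e' : Finset V}
    (h : PairSeparates f e e') : #(e.toFinset ∪ e') = 4 := by
  obtain ⟨s, t, a, b, rfl, rfl, hst, hab, hs, ht, -⟩ := h
  simp only [Finset.mem_insert, Finset.mem_singleton, not_or] at hs ht
  rw [Sym2.toFinset_mk_eq, Finset.insert_union, Finset.singleton_union,
    Finset.card_insert_of_notMem (by simp [hst, hs.1, hs.2]),
    Finset.card_insert_of_notMem (by simp [ht.1, ht.2]), Finset.card_pair hab]

open Classical in
theorem card_pairSeparates_fiber (f : V → Pt) {p q r s : V}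
    (hpq : p ≠ q) (hpr : p ≠ r) (hps : p ≠ s) (hqr : q ≠ r) (hqs : q ≠ s) (hrs : r ≠ s) :
    #{x : Sym2 V × Finset V | PairSeparates f x.1 x.2 ∧ x.1.toFinset ∪ x.2 = {p, q, r, s}} =
      separationCount (f p) (f q) (f r) (f s) := by
  have hset : ({x : Sym2 V × Finset V | PairSeparates f x.1 x.2 ∧
      x.1.toFinset ∪ x.2 = {p, q, r, s}} : Finset (Sym2 V × Finset V)) =
      ({(s(p, q), {r, s}), (s(p, r), {q, s}), (s(p, s), {q, r}), (s(q, r), {p, s}),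
        (s(q, s), {p, r}), (s(r, s), {p, q})} : Finset (Sym2 V × Finset V)).filter
        (fun x => PairSeparates f x.1 x.2) := by
    ext ⟨e, e'⟩
    simp only [Finset.mem_filter, Finset.mem_univ, true_and]
    rw [and_comm]
    refine and_congr_left fun h => ⟨fun hQ => ?_, fun hmem => ?_⟩
    · obtain ⟨s', t', a, b, rfl, -, hst, -, hs, ht, -⟩ := h
      have he' : e' = ({p, q, r, s} : Finset V) \ {s', t'} := by
        rw [← hQ, Sym2.toFinset_mk_eq, Finset.union_sdiff_left, Finset.sdiff_eq_self_of_disjoint]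
        simp [hs, ht]
      have h1 : s' ∈ ({p, q, r, s} : Finset V) := by rw [← hQ]; simp
      have h2 : t' ∈ ({p, q, r, s} : Finset V) := by rw [← hQ]; simp
      have hcases : s(s', t') = s(p, q) ∨ s(s', t') = s(p, r) ∨ s(s', t') = s(p, s) ∨
          s(s', t') = s(q, r) ∨ s(s', t') = s(q, s) ∨ s(s', t') = s(r, s) := by
        simp only [Finset.mem_insert, Finset.mem_singleton] at h1 h2
        simp only [Sym2.eq_iff]
        grind
      have he'' : e' = ({p, q, r, s} : Finset V) \ s(s', t').toFinset := by
        rw [he', Sym2.toFinset_mk_eq]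
      clear he' hst hs ht h1 h2 hQ
      simp only [Finset.mem_insert, Finset.mem_singleton, Prod.mk.injEq]
      rcases hcases with h | h | h | h | h | h <;> rw [h, Sym2.toFinset_mk_eq] at he'' <;>
      [refine .inl ⟨h, ?_⟩; refine .inr (.inl ⟨h, ?_⟩); refine .inr (.inr (.inl ⟨h, ?_⟩));
        refine .inr (.inr (.inr (.inl ⟨h, ?_⟩)));
        refine .inr (.inr (.inr (.inr (.inl ⟨h, ?_⟩))));
        refine .inr (.inr (.inr (.inr (.inr ⟨h, ?_⟩))))] <;>
      · rw [he'']
        ext x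
        simp only [Finset.mem_sdiff, Finset.mem_insert, Finset.mem_singleton]
        grind
    · simp only [Finset.mem_insert, Finset.mem_singleton, Prod.mk.injEq] at hmem
      rcases hmem with ⟨rfl, rfl⟩ | ⟨rfl, rfl⟩ | ⟨rfl, rfl⟩ | ⟨rfl, rfl⟩ | ⟨rfl, rfl⟩ |
        ⟨rfl, rfl⟩ <;>
      · ext x
        simp only [Sym2.toFinset_mk_eq, Finset.mem_union, Finset.mem_insert,
          Finset.mem_singleton]
        tauto
  rw [hset, Finset.card_filter]
  rw [Finset.sum_insert, Finset.sum_insert, Finset.sum_insert, Finset.sum_insert,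
    Finset.sum_insert, Finset.sum_singleton]
  · simp only [separationCount]
    simp only [pairSeparates_mk_pair, hpq, hpr, hps, hqr, hqs, hrs, hpq.symm, hpr.symm, hps.symm,
      hqr.symm, hqs.symm, hrs.symm, ne_eq, not_false_eq_true]
    ring
  all_goals
    simp only [Finset.mem_insert, Finset.mem_singleton, Prod.mk.injEq, Sym2.eq_iff]
    grind

open Classical in
theorem drawingCrossings_top_eq_sum (f : V → Pt) :
    drawingCrossings (⊤ : SimpleGraph V) f = ∑ Q ∈ (univ : Finset V).powersetCard 4,
      #{x : Sym2 V × Finset V | PairSeparates f x.1 x.2 ∧ x.1.toFinset ∪ x.2 = Q} := by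
  rw [drawingCrossings_top_eq_card, Finset.card_eq_sum_card_fiberwise
    (f := fun x : Sym2 V × Finset V => x.1.toFinset ∪ x.2)
    (t := (univ : Finset V).powersetCard 4)]
  · simp only [Finset.filter_filter]
  · intro x hx
    simp only [Finset.coe_filter, Finset.mem_univ, true_and, Set.mem_ofPred_eq] at hx
    simp [Finset.mem_powersetCard, pairSeparates_card hx]

open Classical in
theorem card_fiber_spec {f : V → Pt} (hf : IsRectDrawing f) {Q : Finset V} (hQ : #Q = 4) :
    2 ≤ #{x : Sym2 V × Finset V | PairSeparates f x.1 x.2 ∧ x.1.toFinset ∪ x.2 = Q} ∧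
    (ConvexPosition (Set.range f) →
      #{x : Sym2 V × Finset V | PairSeparates f x.1 x.2 ∧ x.1.toFinset ∪ x.2 = Q} = 2) := by
  obtain ⟨p, q, r, s, hpq, hpr, hps, hqr, hqs, hrs, rfl⟩ := Finset.card_eq_four.1 hQ
  rw [card_pairSeparates_fiber f hpq hpr hps hqr hqs hrs]
  exact separationCount_spec hf.2 ⟨p, rfl⟩ ⟨q, rfl⟩ ⟨r, rfl⟩ ⟨s, rfl⟩ (hf.1.ne hpq) (hf.1.ne hpr)
    (hf.1.ne hps) (hf.1.ne hqr) (hf.1.ne hqs) (hf.1.ne hrs)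

theorem two_mul_choose_le_drawingCrossings {f : V → Pt} (hf : IsRectDrawing f) :
    2 * (Fintype.card V).choose 4 ≤ drawingCrossings (⊤ : SimpleGraph V) f := by
  rw [drawingCrossings_top_eq_sum, mul_comm, ← Finset.card_univ, ← Finset.card_powersetCard,
    ← smul_eq_mul]
  exact Finset.card_nsmul_le_sum _ _ _ fun Q hQ =>
    (card_fiber_spec hf (Finset.mem_powersetCard.1 hQ).2).1

theorem drawingCrossings_eq_of_convexPosition {f : V → Pt} (hf : IsRectDrawing f)
    (hc : ConvexPosition (Set.range f)) :
    drawingCrossings (⊤ : SimpleGraph V) f = 2 * (Fintype.card V).choose 4 := by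
  rw [drawingCrossings_top_eq_sum, Finset.sum_congr rfl fun Q hQ =>
    (card_fiber_spec hf (Finset.mem_powersetCard.1 hQ).2).2 hc, Finset.sum_const,
    Finset.card_powersetCard, Finset.card_univ, smul_eq_mul, mul_comm]

end DoubleCounting

theorem orient_eq_zero_of_collinear {p q r : Pt} (h : p ≠ q)
    (hc : Collinear ℝ ({p, q, r} : Set Pt)) : orient p q r = 0 :=
  (mem_lineThrough_iff h r).1
    (hc.mem_affineSpan_of_mem_of_ne (by simp) (by simp) (by simp) h)

theorem exists_convex_drawing (n : ℕ) :
    ∃ f : Fin n → Pt, IsRectDrawing f ∧ ConvexPosition (Set.range f) := by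
  refine ⟨fun i => ((i : ℝ), (i : ℝ) ^ 2), ⟨?_, Set.finite_range _, ?_⟩, ?_⟩
  · intro i j h
    simpa [Fin.ext_iff] using congrArg Prod.fst h
  · rintro _ ⟨i, rfl⟩ _ ⟨j, rfl⟩ _ ⟨k, rfl⟩ hij hik hjk hc
    have h0 := orient_eq_zero_of_collinear hij hc
    have h1 : ((j : ℝ) - i) * ((k : ℝ) - i) * ((k : ℝ) - j) = 0 := by
      rw [← h0]
      simp only [orient]
      ring
    simp only [mul_eq_zero, sub_eq_zero] at h1
    rcases h1 with (h1 | h1) | h1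
    · exact hij (by simp [h1])
    · exact hik (by simp [h1])
    · exact hjk (by simp [h1])
  · rintro _ ⟨i, rfl⟩ hmem
    have hlin : IsLinearMap ℝ (fun x : Pt => x.2 - 2 * (i : ℝ) * x.1) :=
      ⟨fun x y => by simp; ring, fun c x => by simp; ring⟩
    have hsub := convexHull_min (s := Set.range (fun i : Fin n => ((i : ℝ), (i : ℝ) ^ 2)) \
      {((i : ℝ), (i : ℝ) ^ 2)}) ?_ (convex_halfSpace_gt hlin (-(i : ℝ) ^ 2)) hmem
    · simp only [Set.mem_ofPred_eq] at hsub
      nlinarith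
    · rintro _ ⟨⟨j, rfl⟩, hne⟩
      have hji : (j : ℝ) - i ≠ 0 := fun h => hne (by simp [sub_eq_zero.1 h])
      have := sq_pos_of_ne_zero hji
      simp only [Set.mem_ofPred_eq]
      nlinarith

/-- For n ≥ 4, `OCN(K_n) = 2 * C(n,4)`, and the minimum is attained by
any rectilinear drawing placing all vertices in convex position. -/
theorem stmt_0 (n : ℕ) (hn : 4 ≤ n) :
    OCN (⊤ : SimpleGraph (Fin n)) = 2 * Nat.choose n 4 ∧
    ∀ f : Fin n → Pt, IsRectDrawing f → ConvexPosition (Set.range f) →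
      drawingCrossings (⊤ : SimpleGraph (Fin n)) f = 2 * Nat.choose n 4 := by
  have hconv : ∀ f : Fin n → Pt, IsRectDrawing f → ConvexPosition (Set.range f) →
      drawingCrossings (⊤ : SimpleGraph (Fin n)) f = 2 * Nat.choose n 4 := fun f hf hc => by
    simpa using drawingCrossings_eq_of_convexPosition hf hc
  refine ⟨?_, hconv⟩
  obtain ⟨f, hf, hc⟩ := exists_convex_drawing n
  refine IsLeast.csInf_eq ⟨⟨f, hf, hconv f hf hc⟩, ?_⟩
  rintro _ ⟨g, hg, rfl⟩
  simpa using two_mul_choose_le_drawingCrossings hg
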